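/- arXiv:2511.13693 — 6 statements merged into one kernel-verified Lean document; each statement's English description precedes it below -/
import Mathlib

section
/- Let k > d ≥ 0 be integers and let G be a finite simple graph on n vertices that is k-degenerate. Then α_d(G) ≥ max{ (d+1)·n/(k+d+1), n − α_{k−d−1}(G) }. Furthermore, the vertex set of G can be partitioned into sets X and Y such that the subgraph of G induced on X is d-degenerate and the subgraph of G induced on Y is (k−d−1)-degenerate. -/
/-- The subgraph of `G` induced on `A` is `d`-degenerate: every nonempty (finite)
subset of `A` contains a vertex with at most `d` neighbours inside that subset. -/
def DegenOn {V : Type*} (G : SimpleGraph V) (d : ℕ) (A : Set V) : Prop :=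
  ∀ S : Set V, S ⊆ A → S.Finite → S.Nonempty → ∃ v ∈ S, (S ∩ G.neighborSet v).ncard ≤ d

/-- `G` is `d`-degenerate. -/
def Degen {V : Type*} (G : SimpleGraph V) (d : ℕ) : Prop :=
  DegenOn G d Set.univ

/-- `α_d(G)`: the maximum number of vertices of an induced `d`-degenerate subgraph of `G`. -/
noncomputable def alphaDeg {V : Type*} [Fintype V] (G : SimpleGraph V) (d : ℕ) : ℕ :=
  sSup {m : ℕ | ∃ A : Set V, DegenOn G d A ∧ A.ncard = m}

theorem degenOn_empty {V : Type*} (G : SimpleGraph V) (d : ℕ) : DegenOn G d ∅ := by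
  intro S hS _ hne
  obtain ⟨x, hx⟩ := hne
  exact absurd (hS hx) (by simp)

theorem degenOn_insert {V : Type*} [Finite V] (G : SimpleGraph V) (d : ℕ) (B : Set V) (v : V)
    (hB : DegenOn G d B) (hv : (B ∩ G.neighborSet v).ncard ≤ d) : DegenOn G d (insert v B) := by
  intro S hS hf hne
  by_cases h : v ∈ S
  · refine ⟨v, h, le_trans (Set.ncard_le_ncard ?_ (Set.toFinite _)) hv⟩
    rintro x ⟨hx, hxv⟩
    refine ⟨?_, hxv⟩
    rcases hS hx with rfl | h'
    · simp at hxv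
    · exact h'
  · refine hB S ?_ hf hne
    intro x hx
    rcases hS hx with rfl | h'
    · exact absurd hx h
    · exact h'

theorem degen_induct {V : Type*} [Finite V] (G : SimpleGraph V) (k : ℕ) (hG : Degen G k)
    (P : Set V → Prop) (h0 : P ∅)
    (hs : ∀ A v, v ∉ A → (A ∩ G.neighborSet v).ncard ≤ k → P A → P (insert v A)) :
    ∀ n : ℕ, ∀ A : Set V, A.ncard = n → P A := by
  intro n
  induction n with
  | zero =>
    intro A hA
    rw [Set.ncard_eq_zero] at hA
    rwa [hA]
  | succ n ih =>
    intro A hA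
    have hne : A.Nonempty := by
      rw [← Set.ncard_pos]; omega
    obtain ⟨v, hv, hk⟩ := hG A (Set.subset_univ _) (Set.toFinite _) hne
    have h1 := ih (A \ {v}) (by rw [Set.ncard_diff_singleton_of_mem hv]; omega)
    have h2 := hs (A \ {v}) v (by simp) (le_trans (Set.ncard_le_ncard
      (Set.inter_subset_inter_left _ Set.diff_subset) (Set.toFinite _)) hk) h1
    rwa [Set.insert_diff_singleton, Set.insert_eq_of_mem hv] at h2

theorem degen_partition {V : Type*} [Finite V] (G : SimpleGraph V) (k d : ℕ) (hdk : d < k)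
    (hG : Degen G k) (A : Set V) : ∃ X Y : Set V, X ∪ Y = A ∧ Disjoint X Y ∧
      DegenOn G d X ∧ DegenOn G (k - d - 1) Y := by
  refine degen_induct G k hG (fun A => ∃ X Y : Set V, X ∪ Y = A ∧ Disjoint X Y ∧
      DegenOn G d X ∧ DegenOn G (k - d - 1) Y)
    ⟨∅, ∅, by simp, by simp, degenOn_empty _ _, degenOn_empty _ _⟩ ?_ _ A rfl
  rintro A v hvA hk ⟨X, Y, rfl, hXY, hX, hY⟩
  simp only [Set.mem_union, not_or] at hvA
  by_cases h : (X ∩ G.neighborSet v).ncard ≤ d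
  · exact ⟨insert v X, Y, Set.insert_union, by
      rw [Set.disjoint_insert_left]; exact ⟨hvA.2, hXY⟩, degenOn_insert G d X v hX h, hY⟩
  · refine ⟨X, insert v Y, Set.union_insert, by
      rw [Set.disjoint_insert_right]; exact ⟨hvA.1, hXY⟩, hX, degenOn_insert G _ Y v hY ?_⟩
    rw [Set.union_inter_distrib_right, Set.ncard_union_eq
      (hXY.mono Set.inter_subset_left Set.inter_subset_left)] at hk
    omega

open Classical in
theorem degen_cover {V : Type*} [Fintype V] (G : SimpleGraph V) (k d : ℕ)
    (hG : Degen G k) (A : Set V) : ∃ f : V → Finset (Fin (k + d + 1)),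
      (∀ v ∈ A, (f v).card = d + 1) ∧ ∀ i, DegenOn G d {v | v ∈ A ∧ i ∈ f v} := by
  refine degen_induct G k hG (fun A => ∃ f : V → Finset (Fin (k + d + 1)),
      (∀ v ∈ A, (f v).card = d + 1) ∧ ∀ i, DegenOn G d {v | v ∈ A ∧ i ∈ f v})
    ⟨fun _ => ∅, by simp, fun i => by simpa using degenOn_empty G d⟩ ?_ _ A rfl
  rintro A v hvA hk ⟨f, hf, hD⟩
  set N : Finset V := (A ∩ G.neighborSet v).toFinset with hN
  have hNk : N.card ≤ k := by rwa [hN, ← Set.ncard_eq_toFinset_card']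
  let cnt : Fin (k + d + 1) → ℕ := fun i => (N.filter (fun u => i ∈ f u)).card
  have hsum : ∑ i, cnt i = N.card * (d + 1) := by
    have h1 : ∑ i, cnt i = ∑ u ∈ N, (f u).card := by
      simp only [cnt, Finset.card_filter]
      rw [Finset.sum_comm]
      simp
    rw [h1, Finset.sum_congr rfl (g := fun _ => d + 1)]
    · simp
    · intro u hu
      apply hf
      simp [hN] at hu
      exact hu.1
  let bad : Finset (Fin (k + d + 1)) := Finset.univ.filter (fun i => d + 1 ≤ cnt i)
  have hbad : bad.card ≤ k := by
    have h2 : bad.card * (d + 1) ≤ ∑ i, cnt i := by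
      calc bad.card * (d + 1) ≤ ∑ i ∈ bad, cnt i := by
            rw [← smul_eq_mul]
            apply Finset.card_nsmul_le_sum
            intro i hi
            simpa [bad] using hi
        _ ≤ _ := Finset.sum_le_sum_of_subset (Finset.subset_univ _)
    rw [hsum] at h2
    exact le_trans (Nat.le_of_mul_le_mul_right h2 (by omega)) hNk
  have hgood : d + 1 ≤ badᶜ.card := by
    rw [Finset.card_compl, Fintype.card_fin]; omega
  obtain ⟨T, hT, hTc⟩ := Finset.exists_subset_card_eq hgood
  refine ⟨Function.update f v T, ?_, ?_⟩
  · rintro u (rfl | hu)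
    · simpa using hTc
    · rw [Function.update_of_ne (by rintro rfl; exact hvA hu)]
      exact hf u hu
  · intro i
    have hne : ∀ u ∈ A, Function.update f v T u = f u := fun u hu =>
      Function.update_of_ne (by rintro rfl; exact hvA hu) _ _
    by_cases hi : i ∈ T
    · have : {u | u ∈ insert v A ∧ i ∈ Function.update f v T u}
          = insert v {u | u ∈ A ∧ i ∈ f u} := by
        ext u
        simp only [Set.mem_setOf_eq, Set.mem_insert_iff]
        constructor
        · rintro ⟨rfl | h, h'⟩
          · exact Or.inl rfl
          · rw [hne u h] at h'; exact Or.inr ⟨h, h'⟩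
        · rintro (rfl | ⟨h, h'⟩)
          · exact ⟨Or.inl rfl, by simpa using hi⟩
          · exact ⟨Or.inr h, by rwa [hne u h]⟩
      rw [this]
      refine degenOn_insert G d _ v (hD i) ?_
      have hb : cnt i ≤ d := by
        have := hT hi
        simp [bad] at this
        omega
      refine le_trans (le_of_eq ?_) hb
      rw [Set.ncard_eq_toFinset_card']
      simp only [cnt, hN]
      congr 1
      ext u
      simp
      tauto
    · have : {u | u ∈ insert v A ∧ i ∈ Function.update f v T u}
          = {u | u ∈ A ∧ i ∈ f u} := by
        ext u
        simp only [Set.mem_setOf_eq, Set.mem_insert_iff]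
        constructor
        · rintro ⟨rfl | h, h'⟩
          · simp at h'; exact absurd h' hi
          · rw [hne u h] at h'; exact ⟨h, h'⟩
        · rintro ⟨h, h'⟩
          exact ⟨Or.inr h, by rwa [hne u h]⟩
      rw [this]
      exact hD i

theorem le_alphaDeg {V : Type*} [Fintype V] (G : SimpleGraph V) (d : ℕ) (A : Set V)
    (hA : DegenOn G d A) : A.ncard ≤ alphaDeg G d := by
  refine le_csSup ⟨Nat.card V, ?_⟩ ⟨A, hA, rfl⟩
  rintro m ⟨B, _, rfl⟩
  exact Set.ncard_le_card B

open Classical in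
theorem alphaDeg_ge {V : Type*} [Fintype V] (G : SimpleGraph V) (k d : ℕ)
    (hG : Degen G k) : (d + 1) * Fintype.card V ≤ alphaDeg G d * (k + d + 1) := by
  obtain ⟨f, hf, hD⟩ := degen_cover G k d hG Set.univ
  have h1 : ∑ i : Fin (k + d + 1), (Finset.univ.filter (fun v => i ∈ f v)).card
      = (d + 1) * Fintype.card V := by
    simp only [Finset.card_filter]
    rw [Finset.sum_comm]
    simp [fun v => hf v (Set.mem_univ v), mul_comm]
  rw [← h1]
  have h2 : ∀ i ∈ (Finset.univ : Finset (Fin (k + d + 1))),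
      (Finset.univ.filter (fun v => i ∈ f v)).card ≤ alphaDeg G d := by
    intro i _
    have := le_alphaDeg G d _ (hD i)
    rw [Set.ncard_eq_toFinset_card'] at this
    simpa using this
  have := Finset.sum_le_card_nsmul _ _ _ h2
  simpa [mul_comm] using this

theorem stmt_0 {V : Type*} [Fintype V] (G : SimpleGraph V) (k d : ℕ) (hdk : d < k)
    (hG : Degen G k) :
    (((d : ℚ) + 1) * (Fintype.card V : ℚ) / ((k : ℚ) + (d : ℚ) + 1) ≤ (alphaDeg G d : ℚ) ∧
      (Fintype.card V : ℚ) - (alphaDeg G (k - d - 1) : ℚ) ≤ (alphaDeg G d : ℚ)) ∧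
    ∃ X Y : Set V, X ∪ Y = Set.univ ∧ Disjoint X Y ∧
      DegenOn G d X ∧ DegenOn G (k - d - 1) Y := by
  have hp := degen_partition G k d hdk hG Set.univ
  refine ⟨⟨?_, ?_⟩, hp⟩
  · rw [div_le_iff₀ (by positivity)]
    exact_mod_cast alphaDeg_ge G k d hG
  · obtain ⟨X, Y, hU, hXY, hX, hY⟩ := hp
    have h1 := le_alphaDeg G d X hX
    have h2 := le_alphaDeg G _ Y hY
    have h3 := Set.ncard_union_eq hXY
    rw [hU, Set.ncard_univ, Nat.card_eq_fintype_card] at h3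
    have h4 : Fintype.card V ≤ alphaDeg G d + alphaDeg G (k - d - 1) := by omega
    have h5 : (Fintype.card V : ℚ) ≤ alphaDeg G d + alphaDeg G (k - d - 1) := by
      exact_mod_cast h4
    linarith
end

section
/- Let k > d ≥ 0 be integers and let G be a finite simple graph on n vertices that is k-degenerate. Then α_d(G) ≥ (d+1)·n/(k+d+1). -/
theorem color_aux {V : Type*} [Fintype V] (G : SimpleGraph V) (k d t : ℕ) (ht : k < t * (d + 1))
    (hG : Degen G k) : ∀ (n : ℕ) (A : Set V), A.ncard = n →
      ∃ f : V → Fin t, ∀ i, DegenOn G d (A ∩ f ⁻¹' {i}) := by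
  classical
  have ht0 : 0 < t := by
    rcases Nat.eq_zero_or_pos t with h | h
    · simp [h] at ht
    · exact h
  intro n
  induction n with
  | zero =>
    intro A hA
    have hA' : A = ∅ := (Set.ncard_eq_zero (Set.toFinite A)).1 hA
    subst hA'
    refine ⟨fun _ => ⟨0, ht0⟩, fun i S hS _ hne => ?_⟩
    obtain ⟨x, hx⟩ := hne
    exact absurd (hS hx).1 (Set.notMem_empty x)
  | succ n ih =>
    intro A hA
    have hne : A.Nonempty := by
      rw [← Set.ncard_pos (Set.toFinite A)]; omega
    obtain ⟨v, hv, hdeg⟩ := hG A (Set.subset_univ _) (Set.toFinite A) hne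
    obtain ⟨f, hf⟩ := ih (A \ {v}) (by
      rw [Set.ncard_sdiff_singleton_of_mem hv]; omega)
    have hex : ∃ i : Fin t, ((A ∩ G.neighborSet v) ∩ f ⁻¹' {i}).ncard ≤ d := by
      by_contra! hcon
      have h1 : (A ∩ G.neighborSet v).ncard
          = ∑ i : Fin t, ((A ∩ G.neighborSet v) ∩ f ⁻¹' {i}).ncard := by
        rw [Set.ncard_eq_toFinset_card',
          Finset.card_eq_sum_card_fiberwise (f := f) (t := Finset.univ) (by simp)]
        refine Finset.sum_congr rfl fun i _ => ?_
        rw [Set.ncard_eq_toFinset_card']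
        congr 1
        ext x
        simp [and_assoc]
      have h2 : ∑ i : Fin t, (d + 1) ≤ ∑ i : Fin t, ((A ∩ G.neighborSet v) ∩ f ⁻¹' {i}).ncard :=
        Finset.sum_le_sum fun i _ => hcon i
      simp only [Finset.sum_const, Finset.card_univ, Fintype.card_fin, smul_eq_mul] at h2
      omega
    obtain ⟨i, hi⟩ := hex
    refine ⟨Function.update f v i, fun j S hS hfin hSne => ?_⟩
    by_cases hvS : v ∈ S
    · refine ⟨v, hvS, le_trans (Set.ncard_le_ncard ?_ (Set.toFinite _)) hi⟩
      have hji : i = j := by simpa using (hS hvS).2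
      rintro x ⟨hxS, hxv⟩
      have hne : x ≠ v := by
        rintro rfl
        exact G.loopless.irrefl _ hxv
      have := (hS hxS).2
      refine ⟨⟨(hS hxS).1, hxv⟩, ?_⟩
      simpa [Function.update_of_ne hne, hji] using this
    · refine hf j S ?_ hfin hSne
      intro x hxS
      have hne : x ≠ v := by
        rintro rfl
        exact hvS hxS
      have := (hS hxS).2
      exact ⟨⟨(hS hxS).1, hne⟩, by simpa [Function.update_of_ne hne] using this⟩

theorem stmt_1 {V : Type*} [Fintype V] (G : SimpleGraph V) (k d : ℕ) (hdk : d < k)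
    (hG : Degen G k) :
    ((d : ℚ) + 1) * (Fintype.card V : ℚ) / ((k : ℚ) + (d : ℚ) + 1) ≤ (alphaDeg G d : ℚ) := by
  classical
  obtain ⟨f, hf⟩ := color_aux G k d (k / (d + 1) + 1) (by
    rw [mul_comm]; exact Nat.lt_mul_div_succ k (Nat.succ_pos d)) hG _ Set.univ rfl
  have hle : ∀ i, (Set.univ ∩ f ⁻¹' {i}).ncard ≤ alphaDeg G d := by
    intro i
    refine le_csSup ⟨Fintype.card V, ?_⟩ ⟨_, hf i, rfl⟩
    rintro m ⟨A, _, rfl⟩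
    rw [← Nat.card_eq_fintype_card]
    exact Set.ncard_le_card A
  have hsum : Fintype.card V = ∑ i, (Set.univ ∩ f ⁻¹' {i}).ncard := by
    rw [← Finset.card_univ,
      Finset.card_eq_sum_card_fiberwise (f := f) (t := Finset.univ) (by simp)]
    refine Finset.sum_congr rfl fun i _ => ?_
    rw [Set.ncard_eq_toFinset_card']
    congr 1
    ext x
    simp
  have h1 : Fintype.card V ≤ (k / (d + 1) + 1) * alphaDeg G d := by
    rw [hsum]
    refine (Finset.sum_le_sum fun i _ => hle i).trans ?_
    simp
  have h2 : (d + 1) * (k / (d + 1)) ≤ k := Nat.mul_div_le k (d + 1)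
  have h3 : (d + 1) * Fintype.card V ≤ alphaDeg G d * (k + d + 1) := by
    calc (d + 1) * Fintype.card V ≤ (d + 1) * ((k / (d + 1) + 1) * alphaDeg G d) :=
          Nat.mul_le_mul_left _ h1
      _ = alphaDeg G d * ((d + 1) * (k / (d + 1)) + d + 1) := by ring
      _ ≤ _ := Nat.mul_le_mul_left _ (by omega)
  rw [div_le_iff₀ (by positivity)]
  exact_mod_cast h3
end

section
/- Let k > d ≥ 0 be integers and let G be a finite simple graph on n vertices that is k-degenerate. Then α_d(G) + α_{k−d−1}(G) ≥ n. -/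
theorem DegenOn.insert_aux {V : Type*} [Fintype V] {G : SimpleGraph V} {d : ℕ} {A : Set V} {v : V}
    (hA : DegenOn G d A) (hv : (A ∩ G.neighborSet v).ncard ≤ d) : DegenOn G d (insert v A) := by
  intro T hT hf hne
  by_cases h : v ∈ T
  · refine ⟨v, h, le_trans (Set.ncard_le_ncard ?_ (Set.toFinite _)) hv⟩
    rintro x ⟨hx, hx'⟩
    refine ⟨?_, hx'⟩
    rcases hT hx with rfl | h2
    · exact absurd hx' (by simp)
    · exact h2
  · exact hA T ((Set.subset_insert_iff_of_notMem h).1 hT) hf hne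

theorem split_aux {V : Type*} [Fintype V] (G : SimpleGraph V) (k d : ℕ) (hdk : d < k)
    (hG : Degen G k) (n : ℕ) : ∀ S : Set V, S.ncard = n →
    ∃ A B : Set V, A ∪ B = S ∧ Disjoint A B ∧ DegenOn G d A ∧ DegenOn G (k - d - 1) B := by
  induction n with
  | zero =>
    intro S hS
    have h0 : S = ∅ := (Set.ncard_eq_zero (Set.toFinite _)).1 hS
    refine ⟨∅, ∅, by simp [h0], by simp, ?_, ?_⟩ <;>
    · intro T hT _ hne
      exact absurd (Set.subset_empty_iff.1 hT) hne.ne_empty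
  | succ n ih =>
    intro S hS
    have hne : S.Nonempty := Set.nonempty_of_ncard_ne_zero (by omega)
    obtain ⟨v, hvS, hv⟩ := hG S (Set.subset_univ _) (Set.toFinite _) hne
    obtain ⟨A, B, hU, hD, hA, hB⟩ := ih (S \ {v}) (by
      rw [Set.ncard_diff_singleton_of_mem hvS]; omega)
    have hvU : v ∉ A ∪ B := by rw [hU]; simp
    have hvA : v ∉ A := fun h => hvU (Or.inl h)
    have hvB : v ∉ B := fun h => hvU (Or.inr h)
    have hS' : insert v (A ∪ B) = S := by
      rw [hU]; exact Set.insert_diff_self_of_mem hvS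
    have hsum : (A ∩ G.neighborSet v).ncard + (B ∩ G.neighborSet v).ncard ≤ k := by
      rw [← Set.ncard_union_eq (hD.mono Set.inter_subset_left Set.inter_subset_left)
        (Set.toFinite _) (Set.toFinite _), ← Set.union_inter_distrib_right]
      refine le_trans (Set.ncard_le_ncard ?_ (Set.toFinite _)) hv
      rw [hU]
      exact Set.inter_subset_inter_left _ Set.diff_subset
    by_cases h : (A ∩ G.neighborSet v).ncard ≤ d
    · exact ⟨insert v A, B, by rw [Set.insert_union, hS'],
        Set.disjoint_insert_left.2 ⟨hvB, hD⟩, hA.insert_aux h, hB⟩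
    · exact ⟨A, insert v B, by rw [Set.union_insert, hS'],
        Set.disjoint_insert_right.2 ⟨hvA, hD⟩, hA, hB.insert_aux (by omega)⟩

theorem le_alphaDeg_aux {V : Type*} [Fintype V] {G : SimpleGraph V} {d : ℕ} {A : Set V}
    (hA : DegenOn G d A) : A.ncard ≤ alphaDeg G d := by
  refine le_csSup ⟨Nat.card V, ?_⟩ ⟨A, hA, rfl⟩
  rintro m ⟨B, _, rfl⟩
  exact Set.ncard_le_card B

theorem stmt_2 {V : Type*} [Fintype V] (G : SimpleGraph V) (k d : ℕ) (hdk : d < k)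
    (hG : Degen G k) :
    Fintype.card V ≤ alphaDeg G d + alphaDeg G (k - d - 1) := by
  obtain ⟨A, B, hU, _, hA, hB⟩ := split_aux G k d hdk hG _ Set.univ rfl
  have h1 := le_alphaDeg_aux hA
  have h2 := le_alphaDeg_aux hB
  have h3 := Set.ncard_union_le A B
  rw [hU, Set.ncard_univ, Nat.card_eq_fintype_card] at h3
  omega
end

section
/- Let G be a finite simple graph on the vertex set {v_1, …, v_n} (with this linear ordering) such that every vertex v_i has at most k neighbours among {v_1, …, v_{i−1}}, where k > d ≥ 0 are integers. Colour the vertices in order: colour v_i blue if v_i has at most d neighbours among the earlier vertices already coloured blue, and red otherwise. Let B be the set of blue vertices and R the set of red vertices. Then the subgraph of G induced on B is d-degenerate and the subgraph of G induced on R is (k−d−1)-degenerate. -/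
theorem stmt_4 (n k d : ℕ) (hdk : d < k) (G : SimpleGraph (Fin n))
    (hk : ∀ i : Fin n, {j : Fin n | j < i ∧ G.Adj j i}.ncard ≤ k)
    (B : Set (Fin n))
    (hB : ∀ i : Fin n, i ∈ B ↔ {j : Fin n | j ∈ B ∧ j < i ∧ G.Adj j i}.ncard ≤ d) :
    DegenOn G d B ∧ DegenOn G (k - d - 1) Bᶜ := by
  have key : ∀ S : Set (Fin n), S.Finite → S.Nonempty →
      ∃ v ∈ S, S ∩ G.neighborSet v ⊆ {j | j ∈ S ∧ j < v ∧ G.Adj j v} := by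
    intro S hf hne
    obtain ⟨v, hv, hmax⟩ := Set.exists_max_image S id hf hne
    refine ⟨v, hv, ?_⟩
    rintro j ⟨hj, hadj⟩
    have hadj' : G.Adj v j := hadj
    exact ⟨hj, lt_of_le_of_ne (hmax j hj) hadj'.ne.symm, hadj'.symm⟩
  constructor
  · intro S hS hf hne
    obtain ⟨v, hv, hsub⟩ := key S hf hne
    refine ⟨v, hv, le_trans (Set.ncard_le_ncard ?_ (Set.toFinite _)) ((hB v).1 (hS hv))⟩
    intro j hj
    obtain ⟨h1, h2⟩ := hsub hj
    exact ⟨hS h1, h2⟩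
  · intro S hS hf hne
    obtain ⟨v, hv, hsub⟩ := key S hf hne
    refine ⟨v, hv, ?_⟩
    have h1 : ¬ _ := fun h => hS hv ((hB v).2 h)
    have hdisj : Disjoint (S ∩ G.neighborSet v) {j : Fin n | j ∈ B ∧ j < v ∧ G.Adj j v} := by
      rw [Set.disjoint_left]
      intro j hj hj'
      exact hS hj.1 hj'.1
    have h2 := Set.ncard_union_eq hdisj (Set.toFinite _) (Set.toFinite _)
    have h3 : ((S ∩ G.neighborSet v) ∪ {j : Fin n | j ∈ B ∧ j < v ∧ G.Adj j v}).ncard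
        ≤ {j : Fin n | j < v ∧ G.Adj j v}.ncard := by
      apply Set.ncard_le_ncard _ (Set.toFinite _)
      rintro j (hj | hj)
      · exact (hsub hj).2
      · exact hj.2
    have h4 := hk v
    omega
end

section
/- Let H be the graph on five vertices obtained from the complete graph K_4 by subdividing exactly one edge (replacing one edge uv by a new vertex w adjacent to both u and v). Then H is 2-degenerate, has 5 vertices, and α_1(H) = 3; consequently α_1(2) ≤ 3/5 < 2/3. -/
/-- `α_d(k)`: the infimum, over all finite simple graphs `G` of degeneracy exactly `k`,
of the ratio `α_d(G) / |V(G)|`. -/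
noncomputable def alphaRatio (d k : ℕ) : ℝ :=
  sInf {r : ℝ | ∃ (n : ℕ) (G : SimpleGraph (Fin n)),
    Degen G k ∧ ¬ Degen G (k - 1) ∧ r = (alphaDeg G d : ℝ) / (n : ℝ)}

/-- `K₄` with one edge subdivided: the vertices `0,1,2,3` form `K₄` minus the edge `01`,
and the new vertex `4` is adjacent to exactly `0` and `1`. -/
def subdividedK4 : SimpleGraph (Fin 5) :=
  SimpleGraph.fromRel (fun a b =>
    (a, b) ∈ [((0 : Fin 5), (2 : Fin 5)), (0, 3), (1, 2), (1, 3), (2, 3), (0, 4), (1, 4)])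

instance subdividedK4_dec : DecidableRel subdividedK4.Adj := fun a b => by
  unfold subdividedK4
  simp only [SimpleGraph.fromRel_adj]
  infer_instance

lemma degenOn_coe_iff {n : ℕ} (G : SimpleGraph (Fin n)) [DecidableRel G.Adj] (d : ℕ)
    (A : Finset (Fin n)) :
    DegenOn G d (A : Set (Fin n)) ↔
      ∀ S ∈ A.powerset, S.Nonempty → ∃ v ∈ S, (S.filter (G.Adj v)).card ≤ d := by
  have key : ∀ (S : Finset (Fin n)) (v : Fin n),
      ((S : Set (Fin n)) ∩ G.neighborSet v).ncard = (S.filter (G.Adj v)).card := by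
    intro S v
    rw [← Set.ncard_coe_finset]
    congr 1
    ext x
    simp
  constructor
  · intro h S hS hne
    obtain ⟨v, hv, hc⟩ := h S (by simpa using hS) S.finite_toSet (by simpa using hne)
    exact ⟨v, by simpa using hv, by rwa [key] at hc⟩
  · intro h S hS hf hne
    lift S to Finset (Fin n) using hf
    obtain ⟨v, hv, hc⟩ := h S (by simpa using hS) (by simpa using hne)
    exact ⟨v, by simpa using hv, by rwa [key]⟩

lemma degen_iff {n : ℕ} (G : SimpleGraph (Fin n)) [DecidableRel G.Adj] (d : ℕ) :
    Degen G d ↔ ∀ S ∈ (Finset.univ : Finset (Fin n)).powerset, S.Nonempty →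
      ∃ v ∈ S, (S.filter (G.Adj v)).card ≤ d := by
  rw [← degenOn_coe_iff, Finset.coe_univ]
  rfl

lemma sub_degen : Degen subdividedK4 2 := by
  rw [degen_iff]
  decide +kernel

lemma sub_not_degen : ¬ Degen subdividedK4 1 := by
  rw [degen_iff]
  decide +kernel

lemma sub_upper : ∀ A : Finset (Fin 5),
    (∀ S ∈ A.powerset, S.Nonempty →
      ∃ v ∈ S, (S.filter (subdividedK4.Adj v)).card ≤ 1) → A.card ≤ 3 := by
  decide +kernel

lemma sub_lower : DegenOn subdividedK4 1 (({0, 1, 2} : Finset (Fin 5)) : Set (Fin 5)) := by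
  rw [degenOn_coe_iff]
  decide +kernel

lemma sub_alpha : alphaDeg subdividedK4 1 = 3 := by
  have h : IsGreatest {m : ℕ | ∃ A : Set (Fin 5), DegenOn subdividedK4 1 A ∧ A.ncard = m} 3 := by
    constructor
    · exact ⟨_, sub_lower, by rw [Set.ncard_coe_finset]; rfl⟩
    · rintro m ⟨A, hA, rfl⟩
      lift A to Finset (Fin 5) using A.toFinite
      rw [Set.ncard_coe_finset]
      exact sub_upper A ((degenOn_coe_iff _ _ _).1 hA)
  exact h.csSup_eq

theorem stmt_7 :
    Degen subdividedK4 2 ∧ Fintype.card (Fin 5) = 5 ∧ alphaDeg subdividedK4 1 = 3 ∧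
    alphaRatio 1 2 ≤ 3 / 5 ∧ (3 / 5 : ℝ) < 2 / 3 := by
  refine ⟨sub_degen, rfl, sub_alpha, ?_, by norm_num⟩
  refine csInf_le ⟨0, ?_⟩ ⟨5, subdividedK4, sub_degen, sub_not_degen, ?_⟩
  · rintro r ⟨n, G, -, -, rfl⟩
    positivity
  · rw [sub_alpha]
    norm_num
end

section
/- For every integer k ≥ 2, every k-degenerate finite simple graph G on n vertices satisfies α_1(G) ≥ 2n/(k+2); hence 2/(k+2) ≤ α_1(k) ≤ 2/(k+1). -/
open Classical in
theorem color_exists {V : Type*} [Fintype V] (G : SimpleGraph V) (k t : ℕ) (hG : Degen G k)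
    (ht : k < 2 * t) (S : Finset V) :
    ∃ c : V → Fin t, ∀ i, DegenOn G 1 {x | x ∈ S ∧ c x = i} := by
  induction S using Finset.strongInduction with
  | H S ih =>
    rcases S.eq_empty_or_nonempty with rfl | hS
    · refine ⟨fun _ => ⟨0, by omega⟩, fun i T hT _ ⟨x, hx⟩ => ?_⟩
      exact absurd (hT hx).1 (by simp)
    · obtain ⟨v, hv, hvk⟩ := hG (S : Set V) (Set.subset_univ _) S.finite_toSet (by simpa using hS)
      have hv' : v ∈ S := by simpa using hv
      obtain ⟨c, hc⟩ := ih (S.erase v) (Finset.erase_ssubset hv')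
      have h1 : (S.filter (fun x => G.Adj v x)).card ≤ k := by
        rw [← Set.ncard_coe_finset]
        convert hvk using 2
        ext x; simp
      obtain ⟨i, -, hi⟩ := Finset.exists_card_fiber_lt_of_card_lt_mul (n := 2)
        (s := S.filter (fun x => G.Adj v x)) (t := (Finset.univ : Finset (Fin t))) (f := c)
        (by simp only [Finset.card_univ, Fintype.card_fin]; omega)
      refine ⟨Function.update c v i, fun j T hT hTf hTn => ?_⟩
      by_cases hvT : v ∈ T
      · have hj : i = j := by simpa using (hT hvT).2
        subst hj
        refine ⟨v, hvT, ?_⟩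
        have : T ∩ G.neighborSet v ⊆
            (((S.filter (fun x => G.Adj v x)).filter (fun x => c x = i) : Finset V) : Set V) := by
          rintro x ⟨hx, hxv⟩
          have hxv' : G.Adj v x := hxv
          have h := hT hx
          have hne : x ≠ v := hxv'.ne'
          simp only [Set.mem_setOf_eq, Function.update_of_ne hne] at h
          simp [h, hxv']
        have h2 := Set.ncard_le_ncard this (Finset.finite_toSet _)
        rw [Set.ncard_coe_finset] at h2
        omega
      · refine hc j T (fun x hx => ?_) hTf hTn
        have hne : x ≠ v := fun h => hvT (h ▸ hx)
        have h := hT hx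
        simp only [Set.mem_setOf_eq, Function.update_of_ne hne] at h
        simp [h, hne]

theorem alpha_bdd {V : Type*} [Fintype V] (G : SimpleGraph V) (d : ℕ) :
    BddAbove {m : ℕ | ∃ A : Set V, DegenOn G d A ∧ A.ncard = m} := by
  refine ⟨Fintype.card V, ?_⟩
  rintro m ⟨A, -, rfl⟩
  rw [← Nat.card_eq_fintype_card]
  exact Set.ncard_le_card A

open Classical in
theorem alpha_lower {V : Type*} [Fintype V] (G : SimpleGraph V) (k : ℕ) (hG : Degen G k) :
    2 * (Fintype.card V : ℝ) / ((k : ℝ) + 2) ≤ (alphaDeg G 1 : ℝ) := by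
  obtain ⟨c, hc⟩ := color_exists G k (k / 2 + 1) hG (by omega) Finset.univ
  have hb : ∀ i ∈ (Finset.univ : Finset (Fin (k/2+1))),
      ((Finset.univ : Finset V).filter (fun x => c x = i)).card ≤ alphaDeg G 1 := by
    intro i _
    refine le_csSup (alpha_bdd G 1) ⟨_, hc i, ?_⟩
    rw [← Set.ncard_coe_finset]
    congr 1
    ext x; simp
  have h := Finset.card_le_mul_card_image_of_maps_to (s := (Finset.univ : Finset V))
    (t := (Finset.univ : Finset (Fin (k/2+1)))) (f := c) (by simp) _ hb
  simp only [Finset.card_univ, Fintype.card_fin] at h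
  have h2 : 2 * Fintype.card V ≤ alphaDeg G 1 * (k + 2) := by
    have : 2 * (k / 2 + 1) ≤ k + 2 := by omega
    nlinarith [Nat.mul_le_mul_left (alphaDeg G 1) this]
  rw [div_le_iff₀ (by positivity)]
  exact_mod_cast h2

theorem top_inter {n : ℕ} (S : Set (Fin n)) (v : Fin n) (hv : v ∈ S) :
    (S ∩ (⊤ : SimpleGraph (Fin n)).neighborSet v).ncard + 1 = S.ncard := by
  rw [← Set.ncard_sdiff_singleton_add_one hv]
  congr 2
  ext x
  simp [eq_comm]

theorem stmt_10 (k : ℕ) (hk : 2 ≤ k) :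
    (∀ {V : Type*} [Fintype V] (G : SimpleGraph V), Degen G k →
      2 * (Fintype.card V : ℝ) / ((k : ℝ) + 2) ≤ (alphaDeg G 1 : ℝ)) ∧
    2 / ((k : ℝ) + 2) ≤ alphaRatio 1 k ∧ alphaRatio 1 k ≤ 2 / ((k : ℝ) + 1) := by
  have hmem : ((alphaDeg (⊤ : SimpleGraph (Fin (k+1))) 1 : ℝ) / ((k+1 : ℕ) : ℝ)) ∈
      {r : ℝ | ∃ (n : ℕ) (G : SimpleGraph (Fin n)),
        Degen G k ∧ ¬ Degen G (k - 1) ∧ r = (alphaDeg G 1 : ℝ) / (n : ℝ)} := by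
    refine ⟨k+1, ⊤, ?_, ?_, rfl⟩
    · rintro S - - ⟨v, hv⟩
      refine ⟨v, hv, ?_⟩
      have h1 := top_inter S v hv
      have h2 := Set.ncard_le_card S
      rw [Nat.card_eq_fintype_card, Fintype.card_fin] at h2
      omega
    · intro h
      obtain ⟨v, hv, h⟩ := h Set.univ subset_rfl Set.finite_univ ⟨0, trivial⟩
      have h1 := top_inter _ v hv
      rw [Set.ncard_univ, Nat.card_eq_fintype_card, Fintype.card_fin] at h1
      omega
  refine ⟨fun G hG => alpha_lower G k hG, ?_, ?_⟩
  · refine le_csInf ⟨_, hmem⟩ ?_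
    rintro r ⟨n, G, hG, hG', rfl⟩
    have hn : 0 < n := by
      rcases Nat.eq_zero_or_pos n with rfl | h
      · exact absurd (fun S _ _ ⟨x, _⟩ => x.elim0) hG'
      · exact h
    have h := alpha_lower G k hG
    rw [Fintype.card_fin] at h
    rw [le_div_iff₀ (by exact_mod_cast hn)]
    calc 2 / ((k : ℝ) + 2) * n = 2 * n / ((k : ℝ) + 2) := by ring
      _ ≤ _ := h
  · refine (csInf_le ⟨0, ?_⟩ hmem).trans ?_
    · rintro r ⟨n, G, -, -, rfl⟩
      positivity
    · have : alphaDeg (⊤ : SimpleGraph (Fin (k+1))) 1 ≤ 2 := by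
        refine csSup_le' ?_
        rintro m ⟨A, hA, rfl⟩
        rcases A.eq_empty_or_nonempty with rfl | hne
        · simp
        · obtain ⟨v, hv, h⟩ := hA A subset_rfl A.toFinite hne
          have h1 := top_inter A v hv
          omega
      push_cast
      gcongr
      exact_mod_cast this
end
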